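/- Let G be a group, r a natural number, and let S, S' : Fin r → G be two tuples whose images each generate G. Let φ_{S'} : FreeGroup (Fin r) → G denote the group homomorphism determined by sending the i-th free generator to S' i. Then S and S' are Nielsen equivalent if and only if there exists a tuple T : Fin r → FreeGroup (Fin r) which is a free basis of FreeGroup (Fin r) (i.e. the homomorphism FreeGroup (Fin r) → FreeGroup (Fin r) induced by T is an isomorphism) such that S i = φ_{S'} (T i) for every i. -/

import Mathlib

/-- An elementary Nielsen move on ordered `r`-tuples of elements of a group `G`:
inversion of one entry, permutation (swap) of two entries, or a twist replacing
`g_i` by `g_i * g_j` for some `j ≠ i`, all other entries being kept fixed. -/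
def NielsenMove {G : Type*} [Group G] {r : ℕ} (S S' : Fin r → G) : Prop :=
  (∃ i, S' i = (S i)⁻¹ ∧ ∀ k, k ≠ i → S' k = S k) ∨
  (∃ i j, i ≠ j ∧ S' i = S j ∧ S' j = S i ∧ ∀ k, k ≠ i → k ≠ j → S' k = S k) ∨
  (∃ i j, j ≠ i ∧ S' i = S i * S j ∧ ∀ k, k ≠ i → S' k = S k)

/-- Two tuples are Nielsen equivalent if they lie in the same class of the equivalence
relation generated by the elementary Nielsen moves. -/
def NielsenEquiv {G : Type*} [Group G] {r : ℕ} (S S' : Fin r → G) : Prop :=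
  Relation.EqvGen NielsenMove S S'

namespace NielsenAux
open FreeGroup

section lcp
variable {β : Type*} [DecidableEq β]

/-- Length of the longest common prefix. -/
def lcp : List β → List β → ℕ
  | a :: s, b :: t => if a = b then lcp s t + 1 else 0
  | [], _ => 0
  | _ :: _, [] => 0

theorem lcp_comm (a b : List β) : lcp a b = lcp b a := by
  induction a generalizing b with
  | nil => cases b <;> simp [lcp]
  | cons x s ih => cases b with
    | nil => simp [lcp]
    | cons y t => simp only [lcp, ih t, eq_comm]

theorem lcp_ultra (a b c : List β) : min (lcp a c) (lcp c b) ≤ lcp a b := by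
  induction a generalizing b c with
  | nil => simp [lcp]
  | cons x s ih => cases b with
    | nil => cases c <;> simp [lcp]
    | cons y t => cases c with
      | nil => simp [lcp]
      | cons z u =>
        have := ih t u
        simp only [lcp]
        split_ifs <;> simp_all

theorem take_eq_of_le_lcp (a b : List β) (n : ℕ) (h : n ≤ lcp a b) :
    a.take n = b.take n := by
  induction a generalizing b n with
  | nil => simp_all [lcp]
  | cons x s ih => cases b with
    | nil => simp_all [lcp]
    | cons y t =>
      cases n with
      | zero => simp
      | succ n =>
        simp only [lcp] at h
        split_ifs at h with hxy
        · simp [hxy, ih t n (by omega)]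
        · omega

theorem le_lcp_of_take_eq (a b : List β) (n : ℕ) (hn : n ≤ a.length)
    (h : a.take n = b.take n) : n ≤ lcp a b := by
  induction a generalizing b n with
  | nil => simp_all
  | cons x s ih => cases n with
    | zero => simp
    | succ n => cases b with
      | nil => simp at h
      | cons y t =>
        simp only [List.take_succ_cons, List.cons.injEq] at h
        simp only [lcp, h.1, if_true]
        have := ih t n (by simpa using hn) h.2
        omega

theorem lcp_le_left (a b : List β) : lcp a b ≤ a.length := by
  induction a generalizing b with
  | nil => simp [lcp]
  | cons x s ih => cases b with
    | nil => simp [lcp]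
    | cons y t =>
      have := ih t
      simp only [lcp]
      split_ifs <;> simp_all
end lcp

variable {α : Type*} [DecidableEq α]

theorem reduce_invRev_append_length (L M : List (α × Bool)) (hL : IsReduced L)
    (hM : IsReduced M) :
    (reduce (invRev L ++ M)).length + 2 * lcp L M = L.length + M.length := by
  induction L generalizing M with
  | nil => simp [lcp, hM.reduce_eq]
  | cons a s ih => cases M with
    | nil =>
      have : reduce (invRev (a :: s)) = invRev (a :: s) := by
        rw [reduce_invRev, hL.reduce_eq]
      simp [lcp, this]
    | cons b t =>
      by_cases hab : a = b
      · subst hab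
        have h1 : reduce (invRev (a :: s) ++ a :: t) = reduce (invRev s ++ t) := by
          rw [← toWord_mk, ← toWord_mk]
          congr 1
          have : a :: t = [a] ++ t := rfl
          rw [invRev_cons, this, ← mul_mk, ← mul_mk, ← mul_mk, ← mul_mk, ← inv_mk, ← inv_mk]
          group
        have := ih t (List.IsChain.tail hL) (List.IsChain.tail hM)
        rw [h1]
        simp only [lcp, if_true, List.length_cons]
        omega
      · have hr : IsReduced (invRev (a :: s) ++ b :: t) := by
          have h0 : IsReduced (invRev (a :: s)) := by
            apply IsReduced.of_reduce_eq
            rw [reduce_invRev, hL.reduce_eq]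
          refine List.isChain_append.2 ⟨h0, hM, ?_⟩
          intro x hx y hy
          simp [invRev] at hx hy
          subst hx hy
          intro h
          obtain ⟨a1, a2⟩ := a
          obtain ⟨b1, b2⟩ := b
          simp at h hab ⊢
          have := hab h
          cases a2 <;> cases b2 <;> simp_all
        rw [hr.reduce_eq]
        simp [lcp, hab]

/-- Gromov product: length of the longest common prefix of the reduced words. -/
def gp (g h : FreeGroup α) : ℕ := lcp g.toWord h.toWord

theorem gp_comm (g h : FreeGroup α) : gp g h = gp h g := lcp_comm _ _

theorem gp_ultra (g h k : FreeGroup α) : min (gp g k) (gp k h) ≤ gp g h := lcp_ultra _ _ _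

theorem norm_inv_mul (g h : FreeGroup α) :
    (g⁻¹ * h).norm + 2 * gp g h = g.norm + h.norm := by
  have := reduce_invRev_append_length g.toWord h.toWord isReduced_toWord isReduced_toWord
  rwa [← toWord_inv, ← toWord_mul] at this

theorem norm_mul' (g h : FreeGroup α) :
    (g * h).norm + 2 * gp g⁻¹ h = g.norm + h.norm := by
  have := norm_inv_mul g⁻¹ h
  rwa [inv_inv, norm_inv_eq] at this

theorem gp_self_lt (v : FreeGroup α) (hv : v ≠ 1) : 2 * gp v⁻¹ v < v.norm := by
  by_contra hcon
  have hn : v.norm ≠ 0 := fun h => hv (norm_eq_zero.1 h)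
  have hred : IsReduced v.toWord := isReduced_toWord
  unfold gp at hcon
  rw [toWord_inv] at hcon
  unfold FreeGroup.norm at hcon hn
  generalize v.toWord = L at *
  have ht := take_eq_of_le_lcp (invRev L) L ((L.length - 1) / 2 + 1) (by omega)
  have hk : (L.length - 1) / 2 < L.length := by omega
  have h1 : (invRev L)[(L.length - 1) / 2]'(by simpa using hk) = L[(L.length - 1) / 2] := by
    have := congrArg (fun l => l[(L.length - 1) / 2]?) ht
    simpa [List.getElem?_take, hk] using this
  simp only [invRev, List.getElem_reverse, List.getElem_map, List.length_map] at h1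
  have hR := List.isChain_iff_getElem.1 hred
  rcases Nat.even_or_odd' L.length with ⟨m, hm | hm⟩
  · have h2 := hR (m - 1) (by omega)
    have e1 : (L.length - 1) / 2 = m - 1 := by omega
    have e2 : L.length - 1 - (m - 1) = m - 1 + 1 := by omega
    simp only [e1, e2] at h1
    rw [← h1] at h2
    simp at h2
  · have e1 : (L.length - 1) / 2 = m := by omega
    have e2 : L.length - 1 - m = m := by omega
    simp only [e1, e2] at h1
    have := congrArg Prod.snd h1
    simp at this

section Rank
variable [Fintype α]

/-- Numerical code of a letter. -/
noncomputable def code (x : α × Bool) : ℕ := (Fintype.equivFin (α × Bool) x : ℕ)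

/-- Numerical rank of a word, lexicographic on words of equal length. -/
noncomputable def rank (L : List (α × Bool)) : ℕ :=
  Nat.ofDigits (Fintype.card (α × Bool) + 2) (L.map code).reverse

theorem rank_append_lt (a b s : List (α × Bool)) (h : rank a < rank b) :
    rank (a ++ s) < rank (b ++ s) := by
  unfold rank at *
  simp only [List.map_append, List.reverse_append, Nat.ofDigits_append]
  gcongr

theorem rank_inj (a b : List (α × Bool)) (hl : a.length = b.length) (h : rank a = rank b) :
    a = b := by
  have hc : ∀ L : List (α × Bool), ∀ l ∈ (L.map code).reverse,
      l < Fintype.card (α × Bool) + 2 := by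
    intro L l hl
    simp only [List.mem_reverse, List.mem_map] at hl
    obtain ⟨x, -, rfl⟩ := hl
    have := (Fintype.equivFin (α × Bool) x).isLt
    unfold code
    omega
  have := Nat.ofDigits_inj_of_len_eq (by omega) (by simpa using hl) (hc a) (hc b) h
  have h2 := List.reverse_injective this
  refine List.map_injective_iff.2 ?_ h2
  intro x y hxy
  exact (Fintype.equivFin (α × Bool)).injective (Fin.ext hxy)

/-- Initial half of a word. -/
def half (L : List (α × Bool)) : List (α × Bool) := L.take ((L.length + 1) / 2)

/-- Secondary complexity of an element. -/
noncomputable def mu (g : FreeGroup α) : ℕ := rank (half g.toWord) + rank (half g⁻¹.toWord)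

theorem mu_inv (g : FreeGroup α) : mu g⁻¹ = mu g := by
  unfold mu; rw [inv_inv, add_comm]

theorem mu_mul_lt (v w : FreeGroup α) (m : ℕ) (hv : v.norm = 2 * m) (hm : gp v⁻¹ w = m)
    (hw : 2 * m ≤ w.norm)
    (hr : rank (v.toWord.take m) < rank (v⁻¹.toWord.take m)) :
    (v * w).norm = w.norm ∧ mu (v * w) < mu w := by
  have hnorm : (v * w).norm = w.norm := by
    have := norm_mul' v w
    omega
  refine ⟨hnorm, ?_⟩
  have ht : v⁻¹.toWord.take m = w.toWord.take m := take_eq_of_le_lcp _ _ _ hm.ge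
  obtain ⟨d, hd⟩ : ∃ d, d = w.toWord.drop m := ⟨_, rfl⟩
  obtain ⟨a, ha⟩ : ∃ a, a = v.toWord.take m := ⟨_, rfl⟩
  obtain ⟨b, hb⟩ : ∃ b, b = w.toWord.take m := ⟨_, rfl⟩
  have hwbd : w.toWord = b ++ d := by rw [hb, hd, List.take_append_drop]
  have hvab : v.toWord = a ++ invRev b := by
    rw [hb, ← ht, ha]
    conv_lhs => rw [← List.take_append_drop m v.toWord]
    congr 1
    have hl : v.toWord.length = 2 * m := hv
    rw [toWord_inv]
    simp only [invRev, List.take_reverse, List.map_reverse, List.reverse_reverse,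
      ← List.map_drop, List.length_map, List.map_map]
    rw [hl, show 2 * m - m = m by omega]
    conv_lhs => rw [← List.map_id (List.drop m v.toWord)]
    congr 1
    ext ⟨x, y⟩ <;> simp
  have hal : a.length = m := by
    have hl : v.toWord.length = 2 * m := hv
    rw [ha, List.length_take]; omega
  have hbl : b.length = m := by
    have hl : 2 * m ≤ w.toWord.length := hw
    rw [hb, List.length_take]; omega
  have hdl : d.length + m = w.norm := by
    have : w.norm = (b ++ d).length := by rw [← hwbd]; rfl
    rw [this, List.length_append]; omega
  have hvw : (v * w).toWord = a ++ d := by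
    have e : v * w = mk (a ++ d) := by
      rw [← mk_toWord (x := v), ← mk_toWord (x := w), hvab, hwbd, ← mul_mk, ← mul_mk,
        ← mul_mk, ← inv_mk]
      group
    rw [e, toWord_mk]
    apply List.Sublist.eq_of_length (Red.sublist reduce.red)
    have : (reduce (a ++ d)).length = (v * w).norm := by rw [e]; rfl
    rw [this, hnorm, List.length_append]; omega
  rw [ht, ← ha, ← hb] at hr
  unfold mu
  rw [toWord_inv, toWord_inv, hvw, hwbd]
  have hh : half (invRev (a ++ d)) = half (invRev (b ++ d)) := by
    unfold half
    simp only [invRev_append, List.length_append, invRev_length, hal, hbl]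
    rw [List.take_append_of_le_length, List.take_append_of_le_length] <;>
      rw [invRev_length] <;> omega
  rw [hh]
  have hA : half (a ++ d) = a ++ d.take ((m + d.length + 1) / 2 - m) := by
    unfold half
    rw [List.take_append, List.length_append, hal, List.take_of_length_le (by omega)]
  have hB : half (b ++ d) = b ++ d.take ((m + d.length + 1) / 2 - m) := by
    unfold half
    rw [List.take_append, List.length_append, hbl, List.take_of_length_le (by omega)]
  rw [hA, hB]
  have := rank_append_lt a b (d.take ((m + d.length + 1) / 2 - m)) hr
  omega

end Rank

theorem chain_prod (V : Set (FreeGroup α)) (h1 : ∀ v ∈ V, v ≠ 1)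
    (N1 : ∀ v ∈ V, ∀ w ∈ V, v * w ≠ 1 → 2 * gp v⁻¹ w ≤ v.norm ∧ 2 * gp v⁻¹ w ≤ w.norm)
    (N2 : ∀ u ∈ V, ∀ v ∈ V, ∀ w ∈ V, u * v ≠ 1 → v * w ≠ 1 →
      gp u⁻¹ v + gp v⁻¹ w < v.norm)
    (l : List (FreeGroup α)) : ∀ v, (∀ x ∈ v :: l, x ∈ V) →
    List.IsChain (fun x y => x * y ≠ 1) (v :: l) →
    (∀ u ∈ V, u * v ≠ 1 → gp u⁻¹ (v * l.prod) = gp u⁻¹ v) ∧ v.norm ≤ (v * l.prod).norm ∧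
    (l ≠ [] → (v * l.prod).norm ≠ 1) := by
  induction l with
  | nil => intro v _ _; simp
  | cons w l ih =>
    intro v hV hc
    have hvV : v ∈ V := hV v (by simp)
    have hwV : w ∈ V := hV w (by simp)
    rw [List.isChain_cons_cons] at hc
    obtain ⟨ih1, ih2, -⟩ := ih w (fun x hx => hV x (List.mem_cons_of_mem _ hx)) hc.2
    rw [List.prod_cons]
    generalize w * l.prod = P at *
    have e1 := ih1 v hvV hc.1
    have e2 := norm_mul' v P
    have e3 := norm_inv_mul v (v * P)
    rw [inv_mul_cancel_left] at e3
    obtain ⟨n1, n1'⟩ := N1 v hvV w hwV hc.1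
    refine ⟨?_, by omega, ?_⟩
    · intro u hu huv
      have n2 := N2 u hu v hvV w hwV huv hc.1
      have u1 := gp_ultra u⁻¹ (v * P) v
      have u2 := gp_ultra u⁻¹ v (v * P)
      rw [gp_comm (v * P) v] at u2
      omega
    · intro _ h
      have hv0 : v.norm ≠ 0 := fun h => h1 v hvV (norm_eq_zero.1 h)
      have hw0 : w.norm ≠ 0 := fun h => h1 w hwV (norm_eq_zero.1 h)
      omega

theorem exists_chain {G : Type*} [Group G] (V : Set G) (hinv : ∀ v ∈ V, v⁻¹ ∈ V) (g : G)
    (hg : g ∈ Subgroup.closure V) :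
    ∃ l : List G, (∀ x ∈ l, x ∈ V) ∧ List.IsChain (fun x y => x * y ≠ 1) l ∧ l.prod = g := by
  have key : ∀ v ∈ V, ∀ g : G, (∃ l : List G, (∀ x ∈ l, x ∈ V) ∧
      List.IsChain (fun x y => x * y ≠ 1) l ∧ l.prod = g) →
      ∃ l : List G, (∀ x ∈ l, x ∈ V) ∧ List.IsChain (fun x y => x * y ≠ 1) l ∧
        l.prod = v * g := by
    rintro v hv g ⟨l, hl, hc, rfl⟩
    cases l with
    | nil => exact ⟨[v], by simpa using hv, by simp, by simp⟩
    | cons w t =>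
      by_cases h : v * w = 1
      · refine ⟨t, fun x hx => hl x (List.mem_cons_of_mem _ hx), hc.tail, ?_⟩
        rw [List.prod_cons, ← mul_assoc, h, one_mul]
      · refine ⟨v :: w :: t, ?_, List.isChain_cons_cons.2 ⟨h, hc⟩, by simp⟩
        intro x hx
        rcases List.mem_cons.1 hx with rfl | hx
        · exact hv
        · exact hl x hx
  induction hg using Subgroup.closure_induction_left with
  | one => exact ⟨[], by simp, by simp, by simp⟩
  | mul_left x hx y _ ih => exact key x hx y ih
  | inv_mul_cancel x hx y _ ih => exact key _ (hinv x hx) y ih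

theorem of_mem_of_min [Fintype α] (V : Set (FreeGroup α)) (h1 : ∀ v ∈ V, v ≠ 1)
    (hinv : ∀ v ∈ V, v⁻¹ ∈ V)
    (hmin : ∀ v ∈ V, ∀ w ∈ V, v ≠ w → v * w ≠ 1 →
      w.norm ≤ (v * w).norm ∧ ((v * w).norm = w.norm → mu w ≤ mu (v * w)))
    (hV : Subgroup.closure V = ⊤) (a : α) : of a ∈ V := by
  have N1 : ∀ v ∈ V, ∀ w ∈ V, v * w ≠ 1 →
      2 * gp v⁻¹ w ≤ v.norm ∧ 2 * gp v⁻¹ w ≤ w.norm := by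
    intro v hv w hw hvw
    by_cases h : v = w
    · subst h
      have := gp_self_lt v (h1 v hv)
      omega
    · have m1 := (hmin v hv w hw h hvw).1
      have m2 := (hmin w⁻¹ (hinv w hw) v⁻¹ (hinv v hv) (fun e => h (inv_injective e).symm)
        (by rwa [← mul_inv_rev, inv_ne_one])).1
      rw [← mul_inv_rev, norm_inv_eq, norm_inv_eq] at m2
      have := norm_mul' v w
      omega
  have key : ∀ v ∈ V, ∀ w ∈ V, v * w ≠ 1 → 2 * gp v⁻¹ w = v.norm →
      ¬ rank (v.toWord.take (gp v⁻¹ w)) < rank (v⁻¹.toWord.take (gp v⁻¹ w)) := by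
    intro v hv w hw hvw hg hr
    have hne : v ≠ w := by
      rintro rfl
      have := gp_self_lt v (h1 v hv)
      omega
    have := mu_mul_lt v w _ hg.symm rfl (N1 v hv w hw hvw).2 hr
    have := (hmin v hv w hw hne hvw).2 this.1
    omega
  have N2 : ∀ u ∈ V, ∀ v ∈ V, ∀ w ∈ V, u * v ≠ 1 → v * w ≠ 1 →
      gp u⁻¹ v + gp v⁻¹ w < v.norm := by
    intro u hu v hv w hw huv hvw
    by_contra hcon
    have a1 := N1 u hu v hv huv
    have a2 := N1 v hv w hw hvw
    have k1 := key v hv w hw hvw (by omega)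
    have k2 := key v⁻¹ (hinv v hv) u⁻¹ (hinv u hu) (by rwa [← mul_inv_rev, inv_ne_one])
      (by rw [inv_inv, gp_comm, norm_inv_eq]; omega)
    rw [inv_inv, gp_comm v] at k2
    have e : gp u⁻¹ v = gp v⁻¹ w := by omega
    rw [e] at k2
    have hl : v⁻¹.norm = v.norm := norm_inv_eq
    have hle : gp v⁻¹ w ≤ v⁻¹.toWord.length := by
      change _ ≤ v⁻¹.norm; omega
    have hle' : gp v⁻¹ w ≤ v.toWord.length := by
      change _ ≤ v.norm; omega
    have heq := rank_inj (v⁻¹.toWord.take (gp v⁻¹ w)) (v.toWord.take (gp v⁻¹ w))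
      (by rw [List.length_take, List.length_take]; omega) (by omega)
    have := le_lcp_of_take_eq _ _ _ hle heq
    have h3 := gp_self_lt v (h1 v hv)
    change _ ≤ gp v⁻¹ v at this
    omega
  obtain ⟨l, hl, hc, hp⟩ := exists_chain V hinv (of a) (by rw [hV]; trivial)
  cases l with
  | nil => simp at hp
  | cons v l =>
    have := (chain_prod V h1 N1 N2 l v hl hc).2.2
    rw [List.prod_cons] at hp
    rw [hp, norm_of] at this
    have hnil : l = [] := by
      by_contra h; exact this h rfl
    subst hnil
    rw [List.prod_nil, mul_one] at hp
    rw [← hp]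
    exact hl v (by simp)


section Moves
variable {G : Type*} [Group G] {r : ℕ}

theorem ne_refl (U : Fin r → G) : NielsenEquiv U U := Relation.EqvGen.refl _

theorem ne_symm {U W : Fin r → G} (h : NielsenEquiv U W) : NielsenEquiv W U :=
  Relation.EqvGen.symm _ _ h

theorem ne_trans {U W X : Fin r → G} (h : NielsenEquiv U W) (h' : NielsenEquiv W X) :
    NielsenEquiv U X := Relation.EqvGen.trans _ _ _ h h'

theorem ne_inv (U : Fin r → G) (i : Fin r) :
    NielsenEquiv U (Function.update U i (U i)⁻¹) := by
  apply Relation.EqvGen.rel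
  left
  exact ⟨i, by simp, fun k hk => by simp [hk]⟩

theorem ne_mul (U : Fin r → G) (i j : Fin r) (h : j ≠ i) :
    NielsenEquiv U (Function.update U i (U i * U j)) := by
  apply Relation.EqvGen.rel
  right; right
  exact ⟨i, j, h, by simp, fun k hk => by simp [hk]⟩

theorem ne_mul_inv (U : Fin r → G) (i j : Fin r) (h : j ≠ i) :
    NielsenEquiv U (Function.update U i (U i * (U j)⁻¹)) := by
  have := ne_mul (Function.update U i (U i * (U j)⁻¹)) i j h
  simp only [Function.update_self, Function.update_of_ne h, inv_mul_cancel_right,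
    Function.update_idem, Function.update_eq_self] at this
  exact ne_symm this

theorem ne_left_mul (U : Fin r → G) (i j : Fin r) (h : j ≠ i) :
    NielsenEquiv U (Function.update U i (U j * U i)) := by
  have h1 := ne_inv U i
  have h2 := ne_mul_inv (Function.update U i (U i)⁻¹) i j h
  have h3 := ne_inv (Function.update U i ((U i)⁻¹ * (U j)⁻¹)) i
  simp only [Function.update_self, Function.update_of_ne h, Function.update_idem,
    mul_inv_rev, inv_inv] at h1 h2 h3
  exact ne_trans h1 (ne_trans h2 h3)

theorem ne_left_inv_mul (U : Fin r → G) (i j : Fin r) (h : j ≠ i) :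
    NielsenEquiv U (Function.update U i ((U j)⁻¹ * U i)) := by
  have := ne_left_mul (Function.update U i ((U j)⁻¹ * U i)) i j h
  simp only [Function.update_self, Function.update_of_ne h, mul_inv_cancel_left,
    Function.update_idem, Function.update_eq_self] at this
  exact ne_symm this

theorem ne_signed (U : Fin r → G) (i j : Fin r) (h : j ≠ i) (v w : G)
    (hv : v = U j ∨ v = (U j)⁻¹) (hw : w = U i ∨ w = (U i)⁻¹) :
    ∃ x, (x = v * w ∨ x = (v * w)⁻¹) ∧ NielsenEquiv U (Function.update U i x) := by
  rcases hw with rfl | rfl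
  · refine ⟨v * U i, Or.inl rfl, ?_⟩
    rcases hv with rfl | rfl
    · exact ne_left_mul U i j h
    · exact ne_left_inv_mul U i j h
  · refine ⟨U i * v⁻¹, Or.inr (by group), ?_⟩
    rcases hv with rfl | rfl
    · exact ne_mul_inv U i j h
    · rw [inv_inv]; exact ne_mul U i j h

theorem ne_signs (s : Finset (Fin r)) (B : Fin r → G) : ∀ A : Fin r → G,
    (∀ j, A j = B j ∨ A j = (B j)⁻¹) → (∀ j, j ∉ s → A j = B j) → NielsenEquiv A B := by
  induction s using Finset.induction_on with
  | empty =>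
    intro A _ h
    have : A = B := funext fun j => h j (by simp)
    rw [this]; exact ne_refl B
  | insert i s _ ih =>
    intro A h h'
    rcases h i with hi | hi
    · refine ih A h fun j hj => ?_
      by_cases hji : j = i
      · rw [hji, hi]
      · exact h' j (by simp [hji, hj])
    · refine ne_trans (ne_inv A i) (ih _ (fun j => ?_) (fun j hj => ?_))
      · by_cases hji : j = i
        · subst hji; left; simp [hi]
        · simp only [Function.update_of_ne hji]; exact h j
      · by_cases hji : j = i
        · subst hji; simp [hi]
        · simp only [Function.update_of_ne hji]; exact h' j (by simp [hji, hj])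

theorem ne_perm (τ : Equiv.Perm (Fin r)) : ∀ A : Fin r → G, NielsenEquiv (A ∘ τ) A := by
  induction τ using Equiv.Perm.swap_induction_on with
  | one => intro A; exact ne_refl A
  | swap_mul f x y hxy ih =>
    intro A
    have h1 := ih (A ∘ Equiv.swap x y)
    refine ne_trans h1 (ne_symm (Relation.EqvGen.rel _ _ ?_))
    right; left
    refine ⟨x, y, hxy, by simp, by simp, fun k hk hk' => ?_⟩
    simp [Equiv.swap_apply_of_ne_of_ne hk hk']

theorem ne_map {H : Type*} [Group H] (f : G →* H) {U W : Fin r → G} (h : NielsenEquiv U W) :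
    NielsenEquiv (f ∘ U) (f ∘ W) := by
  induction h with
  | rel x y h =>
    apply Relation.EqvGen.rel
    rcases h with ⟨i, h1, h2⟩ | ⟨i, j, hij, h1, h2, h3⟩ | ⟨i, j, hij, h1, h2⟩
    · left; exact ⟨i, by simp [h1], fun k hk => by simp [h2 k hk]⟩
    · right; left
      exact ⟨i, j, hij, by simp [h1], by simp [h2], fun k hk hk' => by simp [h3 k hk hk']⟩
    · right; right; exact ⟨i, j, hij, by simp [h1], fun k hk => by simp [h2 k hk]⟩
  | refl x => exact ne_refl _
  | symm x y _ ih => exact ne_symm ih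
  | trans x y z _ _ ih1 ih2 => exact ne_trans ih1 ih2

theorem closure_le_of_move {U W : Fin r → G} (h : NielsenMove U W) :
    Subgroup.closure (Set.range U) = Subgroup.closure (Set.range W) := by
  apply le_antisymm <;> rw [Subgroup.closure_le] <;> rintro _ ⟨k, rfl⟩
  · have hW : ∀ k, W k ∈ Subgroup.closure (Set.range W) :=
      fun k => Subgroup.subset_closure ⟨k, rfl⟩
    rcases h with ⟨i, h1, h2⟩ | ⟨i, j, hij, h1, h2, h3⟩ | ⟨i, j, hij, h1, h2⟩
    · by_cases hk : k = i
      · subst hk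
        have := inv_mem (hW k)
        rwa [h1, inv_inv] at this
      · have := hW k
        rwa [h2 k hk] at this
    · by_cases hk : k = i
      · subst hk
        have := hW j
        rwa [h2] at this
      · by_cases hk' : k = j
        · subst hk'
          have := hW i
          rwa [h1] at this
        · have := hW k
          rwa [h3 k hk hk'] at this
    · by_cases hk : k = i
      · subst hk
        have := mul_mem (hW k) (inv_mem (hW j))
        rwa [h1, h2 j hij, mul_inv_cancel_right] at this
      · have := hW k
        rwa [h2 k hk] at this
  · have hU : ∀ k, U k ∈ Subgroup.closure (Set.range U) :=
      fun k => Subgroup.subset_closure ⟨k, rfl⟩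
    rcases h with ⟨i, h1, h2⟩ | ⟨i, j, hij, h1, h2, h3⟩ | ⟨i, j, hij, h1, h2⟩
    · by_cases hk : k = i
      · subst hk
        rw [h1]; exact inv_mem (hU k)
      · rw [h2 k hk]; exact hU k
    · by_cases hk : k = i
      · subst hk
        rw [h1]; exact hU j
      · by_cases hk' : k = j
        · subst hk'
          rw [h2]; exact hU i
        · rw [h3 k hk hk']; exact hU k
    · by_cases hk : k = i
      · subst hk
        rw [h1]; exact mul_mem (hU k) (hU j)
      · rw [h2 k hk]; exact hU k

theorem closure_eq {U W : Fin r → G} (h : NielsenEquiv U W) :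
    Subgroup.closure (Set.range U) = Subgroup.closure (Set.range W) := by
  induction h with
  | rel x y h => exact closure_le_of_move h
  | refl x => rfl
  | symm x y _ ih => exact ih.symm
  | trans x y z _ _ ih1 ih2 => exact ih1.trans ih2

end Moves

theorem sum_update {G : Type*} {r : ℕ} (f : G → ℕ) (U : Fin r → G) (i : Fin r) (x : G) :
    ∑ k, f (Function.update U i x k) + f (U i) = ∑ k, f (U k) + f x := by
  rw [← Finset.add_sum_erase _ _ (Finset.mem_univ i),
    ← Finset.add_sum_erase Finset.univ (fun k => f (U k)) (Finset.mem_univ i)]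
  have : ∑ k ∈ Finset.univ.erase i, f (Function.update U i x k) =
      ∑ k ∈ Finset.univ.erase i, f (U k) := by
    apply Finset.sum_congr rfl
    intro k hk
    rw [Function.update_of_ne (Finset.ne_of_mem_erase hk)]
  rw [this, Function.update_self]
  ring

/-- Nielsen's theorem: a generating `r`-tuple of the free group of rank `r` is Nielsen equivalent
to the standard basis. -/
theorem ne_standard {r : ℕ} (T : Fin r → FreeGroup (Fin r))
    (hT : Subgroup.closure (Set.range T) = ⊤) : NielsenEquiv T FreeGroup.of := by
  let M : (Fin r → FreeGroup (Fin r)) → ℕ ×ₗ ℕ :=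
    fun U => toLex (∑ k, (U k).norm, ∑ k, mu (U k))
  obtain ⟨U, hU, hUmin⟩ := (InvImage.wf M wellFounded_lt).has_min
    {U | NielsenEquiv T U} ⟨T, ne_refl T⟩
  have hUcl : Subgroup.closure (Set.range U) = ⊤ := by rw [← closure_eq hU, hT]
  let V : Set (FreeGroup (Fin r)) := {g | g ≠ 1 ∧ ∃ j, g = U j ∨ g = (U j)⁻¹}
  have hVinv : ∀ v ∈ V, v⁻¹ ∈ V := by
    rintro v ⟨hv, j, hj⟩
    refine ⟨inv_ne_one.2 hv, j, ?_⟩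
    rcases hj with rfl | rfl
    · right; rfl
    · left; simp
  have hVcl : Subgroup.closure V = ⊤ := by
    rw [eq_top_iff, ← hUcl, Subgroup.closure_le]
    rintro _ ⟨j, rfl⟩
    by_cases h : U j = 1
    · rw [h]; exact one_mem _
    · exact Subgroup.subset_closure ⟨h, j, Or.inl rfl⟩
  have hmin : ∀ v ∈ V, ∀ w ∈ V, v ≠ w → v * w ≠ 1 →
      w.norm ≤ (v * w).norm ∧ ((v * w).norm = w.norm → mu w ≤ mu (v * w)) := by
    rintro v ⟨-, j, hj⟩ w ⟨-, i, hi⟩ hne hvw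
    have hij : j ≠ i := by
      rintro rfl
      rcases hj with rfl | rfl <;> rcases hi with rfl | rfl <;> simp_all
    obtain ⟨x, hx, hUx⟩ := ne_signed U i j hij v w hj hi
    have hlt := hUmin _ (ne_trans hU hUx)
    have s1 := sum_update FreeGroup.norm U i x
    have s2 := sum_update mu U i x
    have x1 : x.norm = (v * w).norm := by
      rcases hx with rfl | rfl
      · rfl
      · exact norm_inv_eq
    have x2 : mu x = mu (v * w) := by
      rcases hx with rfl | rfl
      · rfl
      · exact mu_inv _
    have w1 : w.norm = (U i).norm := by
      rcases hi with rfl | rfl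
      · rfl
      · exact norm_inv_eq
    have w2 : mu w = mu (U i) := by
      rcases hi with rfl | rfl
      · rfl
      · exact mu_inv _
    simp only [InvImage, M, Prod.Lex.toLex_lt_toLex, not_or, not_and] at hlt
    obtain ⟨l1, l2⟩ := hlt
    refine ⟨by omega, fun h => ?_⟩
    have := l2 (by omega)
    omega
  have hof := of_mem_of_min V (fun v hv => hv.1) hVinv hmin hVcl
  choose σ hσ using fun a => (hof a).2
  have hinj : Function.Injective σ := by
    intro a b hab
    have ha := hσ a
    have hb := hσ b
    rw [← hab] at hb
    by_contra hne
    have h1 : FreeGroup.of a = FreeGroup.of b ∨ FreeGroup.of a = (FreeGroup.of b)⁻¹ := by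
      rcases ha with ha | ha <;> rcases hb with hb | hb <;> rw [ha, hb] <;> simp
    rcases h1 with h1 | h1
    · exact hne (FreeGroup.of_injective h1)
    · have := congrArg FreeGroup.toWord h1
      simp [invRev] at this
  let e : Equiv.Perm (Fin r) := Equiv.ofBijective σ (Finite.injective_iff_bijective.1 hinj)
  have h1 : NielsenEquiv (U ∘ e) FreeGroup.of := by
    refine ne_signs Finset.univ _ _ (fun j => ?_) (fun j hj => absurd (Finset.mem_univ j) hj)
    change U (σ j) = _ ∨ U (σ j) = _
    rcases hσ j with h | h
    · left; exact h.symm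
    · right; rw [h, inv_inv]
  exact ne_trans hU (ne_trans (ne_symm (ne_perm e U)) h1)

/-- `S` is obtained from `S'` by a free basis. -/
def Rel {G : Type*} [Group G] {r : ℕ} (S S' : Fin r → G) : Prop :=
  ∃ φ : FreeGroup (Fin r) ≃* FreeGroup (Fin r),
    ∀ x, FreeGroup.lift S x = FreeGroup.lift S' (φ x)

theorem rel_of {G : Type*} [Group G] {r : ℕ} {S S' : Fin r → G}
    (T T' : Fin r → FreeGroup (Fin r))
    (h1 : ∀ i, FreeGroup.lift T (T' i) = FreeGroup.of i)
    (h2 : ∀ i, FreeGroup.lift T' (T i) = FreeGroup.of i)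
    (h : ∀ i, S i = FreeGroup.lift S' (T i)) : Rel S S' := by
  refine ⟨MonoidHom.toMulEquiv (FreeGroup.lift T) (FreeGroup.lift T') ?_ ?_, ?_⟩
  · ext i; simp [h2]
  · ext i; simp [h1]
  · intro x
    have : FreeGroup.lift S = (FreeGroup.lift S').comp (FreeGroup.lift T) := by
      ext i; simp [h]
    rw [this]; rfl

theorem rel_of_move {G : Type*} [Group G] {r : ℕ} {S S' : Fin r → G}
    (h : NielsenMove S' S) : Rel S S' := by
  rcases h with ⟨i, h1, h2⟩ | ⟨i, j, hij, h1, h2, h3⟩ | ⟨i, j, hij, h1, h2⟩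
  · refine rel_of (Function.update FreeGroup.of i (FreeGroup.of i)⁻¹)
      (Function.update FreeGroup.of i (FreeGroup.of i)⁻¹) ?_ ?_ ?_ <;> intro k <;>
      by_cases hk : k = i
    all_goals first | subst hk; simp [*] | simp [*]
  · refine rel_of (FreeGroup.of ∘ Equiv.swap i j) (FreeGroup.of ∘ Equiv.swap i j) ?_ ?_ ?_
    · intro k; simp
    · intro k; simp
    · intro k
      by_cases hk : k = i
      · subst hk; simp [h1]
      · by_cases hk' : k = j
        · subst hk'; simp [h2]
        · simp [Equiv.swap_apply_of_ne_of_ne hk hk', h3 k hk hk']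
  · refine rel_of (Function.update FreeGroup.of i (FreeGroup.of i * FreeGroup.of j))
      (Function.update FreeGroup.of i (FreeGroup.of i * (FreeGroup.of j)⁻¹)) ?_ ?_ ?_ <;>
      intro k <;> by_cases hk : k = i
    all_goals first | subst hk; simp [*] | simp [*]

theorem rel_symm {G : Type*} [Group G] {r : ℕ} {S S' : Fin r → G} (h : Rel S S') :
    Rel S' S := by
  obtain ⟨φ, h⟩ := h
  exact ⟨φ.symm, fun x => by rw [h]; simp⟩

theorem rel_of_ne {G : Type*} [Group G] {r : ℕ} {S S' : Fin r → G}
    (h : NielsenEquiv S S') : Rel S S' := by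
  induction h with
  | rel x y h => exact rel_symm (rel_of_move h)
  | refl x => exact ⟨MulEquiv.refl _, fun _ => rfl⟩
  | symm x y _ ih => exact rel_symm ih
  | trans x y z _ _ ih1 ih2 =>
    obtain ⟨φ, h⟩ := ih1
    obtain ⟨ψ, h'⟩ := ih2
    exact ⟨φ.trans ψ, fun x => by rw [h, h']; rfl⟩

end NielsenAux

/-- Two generating `r`-tuples `S`, `S'` of a group `G` are Nielsen equivalent if and only
if there is a free basis `T` of the free group on `r` generators (i.e. a tuple whose
induced endomorphism of the free group is an isomorphism) with `S i = φ_{S'}(T i)` for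
all `i`, where `φ_{S'}` is the homomorphism sending the `i`-th free generator to `S' i`. -/
theorem nielsenEquiv_iff_exists_freeBasis {G : Type*} [Group G] {r : ℕ}
    (S S' : Fin r → G)
    (hS : Subgroup.closure (Set.range S) = ⊤)
    (hS' : Subgroup.closure (Set.range S') = ⊤) :
    NielsenEquiv S S' ↔
      ∃ T : Fin r → FreeGroup (Fin r),
        Function.Bijective (FreeGroup.lift T) ∧
        ∀ i, S i = FreeGroup.lift S' (T i) := by
  constructor
  · intro h
    obtain ⟨φ, hφ⟩ := NielsenAux.rel_of_ne h
    refine ⟨fun i => φ (FreeGroup.of i), ?_, fun i => ?_⟩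
    · have : FreeGroup.lift (fun i => φ (FreeGroup.of i)) = φ.toMonoidHom := by
        ext i; simp
      rw [this]; exact φ.bijective
    · rw [← hφ, FreeGroup.lift_apply_of]
  · rintro ⟨T, hT, h⟩
    have hcl : Subgroup.closure (Set.range T) = ⊤ := by
      rw [← FreeGroup.range_lift_eq_closure]
      exact MonoidHom.range_eq_top.2 hT.surjective
    have := NielsenAux.ne_map (FreeGroup.lift S') (NielsenAux.ne_standard T hcl)
    have e1 : S = FreeGroup.lift S' ∘ T := funext h
    have e2 : S' = FreeGroup.lift S' ∘ FreeGroup.of := by ext i; simp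
    rw [e1]
    conv_rhs => rw [e2]
    exact this
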